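/- (Lemma 1) Let V be a finite nonempty type, κ ≥ 1, z : V → Fin κ a partition of V into κ nonempty blocks, and S : V → V → ℝ a block-supported nonnegative similarity (S i j ≥ 0 for all i, j, and S i j = 0 whenever z i ≠ z j). Assume every block b contains an element j' with S j' j' > 0, and assume dominance comparability within blocks: for any two elements i, j with z i = z j, either S p i ≥ S p j for all p with z p = z i, or S p j ≥ S p i for all p with z p = z i. Let F(C) = ∑_{p ∈ V} max_{c ∈ C} S p c. Then any finite subset C of V with |C| = κ that maximizes F among all subsets of size κ contains exactly one element from each block: for every b ∈ Fin κ, |C ∩ z⁻¹(b)| = 1. -/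

import Mathlib

/-!
The proof is an exchange argument. If the `κ`-element set `C` had two elements `i ≠ j` in one block,
then by counting it would miss some block `b`. By comparability one of the two, say `i`, dominates
the other everywhere (outside their block both similarities vanish), so removing `j` from `C` costs
nothing. Replacing `j` by an element `v` of `b` with `S v v > 0` raises the term at `p = v` from `0`
to at least `S v v` and lowers no other term (`facilityLocation_lt_swap`), contradicting maximality.
Hence `z` is injective on `C`, and since `|C| = κ` it hits each block exactly once.
-/

/-- Max of `f` over a finite set, taken to be `0` on the empty set. -/
noncomputable def maxOr0 {V : Type*} (C : Finset V) (f : V → ℝ) : ℝ :=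
  if h : C.Nonempty then C.sup' h f else 0

/-- The facility-location set function `F(C) = ∑ p, max_{c ∈ C} S p c`. -/
noncomputable def facilityLocation {V : Type*} [Fintype V] (S : V → V → ℝ)
    (C : Finset V) : ℝ :=
  ∑ p : V, maxOr0 C (S p)

lemma le_maxOr0 {V : Type*} {C : Finset V} {f : V → ℝ} {c : V} (hc : c ∈ C) :
    f c ≤ maxOr0 C f := by
  have h : C.Nonempty := ⟨c, hc⟩
  rw [maxOr0, dif_pos h]
  exact Finset.le_sup' f hc

lemma maxOr0_le {V : Type*} {C : Finset V} {f : V → ℝ} {a : ℝ} (ha : 0 ≤ a)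
    (h : ∀ c ∈ C, f c ≤ a) : maxOr0 C f ≤ a := by
  unfold maxOr0
  split_ifs with hC
  · exact Finset.sup'_le hC f h
  · exact ha

/-- Exchange step: swapping an element `j` dominated by another `i ∈ C` for an element `v` to which
`C` contributes nothing strictly increases the facility-location value. -/
lemma facilityLocation_lt_swap {V : Type*} [Fintype V] [DecidableEq V] {S : V → V → ℝ}
    (hS : ∀ i j, 0 ≤ S i j) {C : Finset V} {i j v : V} (hi : i ∈ C) (hij : i ≠ j)
    (hdom : ∀ p, S p j ≤ S p i) (hv : ∀ c ∈ C, S v c = 0) (hvv : 0 < S v v) :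
    facilityLocation S C < facilityLocation S (insert v (C.erase j)) := by
  have hvD : v ∈ insert v (C.erase j) := Finset.mem_insert_self _ _
  have hiD : i ∈ insert v (C.erase j) :=
    Finset.mem_insert_of_mem (Finset.mem_erase.2 ⟨hij, hi⟩)
  refine Finset.sum_lt_sum (fun p _ => ?_) ⟨v, Finset.mem_univ _, ?_⟩
  · refine maxOr0_le ((hS p v).trans (le_maxOr0 hvD)) fun c hc => ?_
    by_cases hcj : c = j
    · subst hcj
      exact (hdom p).trans (le_maxOr0 hiD)
    · exact le_maxOr0 (Finset.mem_insert_of_mem (Finset.mem_erase.2 ⟨hcj, hc⟩))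
  · exact (maxOr0_le le_rfl fun c hc => (hv c hc).le).trans_lt (hvv.trans_le (le_maxOr0 hvD))

theorem stmt_7 {V : Type*} [Fintype V] [Nonempty V] (κ : ℕ) (hκ : 1 ≤ κ)
    (z : V → Fin κ) (S : V → V → ℝ)
    (hS_nonneg : ∀ i j, 0 ≤ S i j)
    (hS_block : ∀ i j, z i ≠ z j → S i j = 0)
    (hblocks : ∀ b : Fin κ, ∃ j' : V, z j' = b ∧ 0 < S j' j')
    (hcomp : ∀ i j : V, z i = z j →
      (∀ p, z p = z i → S p j ≤ S p i) ∨ (∀ p, z p = z i → S p i ≤ S p j))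
    (C : Finset V) (hcard : C.card = κ)
    (hmax : ∀ D : Finset V, D.card = κ → facilityLocation S D ≤ facilityLocation S C) :
    ∀ b : Fin κ, (C.filter (fun v => z v = b)).card = 1 := by
  classical
  have hinj : Set.InjOn z C := by
    by_contra hnot
    have hlt : (C.image z).card < (Finset.univ : Finset (Fin κ)).card := by
      rw [Finset.card_univ, Fintype.card_fin]
      exact (lt_of_le_of_ne Finset.card_image_le fun h =>
        hnot (Finset.card_image_iff.1 h)).trans_eq hcard
    obtain ⟨b, -, hb⟩ := Finset.exists_mem_notMem_of_card_lt_card hlt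
    obtain ⟨v, hvb, hvv⟩ := hblocks b
    have hne : ∀ c ∈ C, z v ≠ z c := fun c hc h =>
      hb (Finset.mem_image.2 ⟨c, hc, h.symm.trans hvb⟩)
    have hvC : v ∉ C := fun h => hne v h rfl
    have no_dom : ∀ i ∈ C, ∀ j ∈ C, i ≠ j → z i = z j →
        ¬ ∀ p, z p = z i → S p j ≤ S p i := by
      intro i hi j hj hij hz hdom
      have hdom_all : ∀ p, S p j ≤ S p i := fun p => by
        by_cases hp : z p = z i
        · exact hdom p hp
        · rw [hS_block p j (hz ▸ hp)]
          exact hS_nonneg p i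
      have hD : (insert v (C.erase j)).card = κ := by
        rw [Finset.card_insert_of_notMem fun h => hvC (Finset.mem_of_mem_erase h),
          Finset.card_erase_add_one hj, hcard]
      exact (facilityLocation_lt_swap hS_nonneg hi hij hdom_all
        (fun c hc => hS_block v c (hne c hc)) hvv).not_ge (hmax _ hD)
    refine hnot fun i hi j hj hz => ?_
    by_contra hij
    rcases hcomp i j hz with h | h
    · exact no_dom i hi j hj hij hz h
    · exact no_dom j hj i hi (Ne.symm hij) hz.symm fun p hp => h p (hp.trans hz.symm)
  have himage : C.image z = Finset.univ := by
    rw [← Finset.card_eq_iff_eq_univ, Finset.card_image_of_injOn hinj, hcard, Fintype.card_fin]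
  intro b
  obtain ⟨c, hc, hcb⟩ := Finset.mem_image.1 (himage ▸ Finset.mem_univ b : b ∈ C.image z)
  refine Finset.card_eq_one.2 ⟨c, Finset.ext fun x => ?_⟩
  rw [Finset.mem_filter, Finset.mem_singleton]
  constructor
  · rintro ⟨hx, hxb⟩
    exact hinj hx hc (hxb.trans hcb.symm)
  · rintro rfl
    exact ⟨hc, hcb⟩
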